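/- Let W ⊂ P^2 be a line count configuration of type (1, 2, 3, …, t) over an algebraically closed field k of characteristic 0. Then for every integer r ≥ 1, α(2rW) ≥ r·α(W) + r. -/

import Mathlib

open scoped LinearAlgebra.Projectivization

/-- The homogeneous ideal of a point `P` of `ℙ²`: all polynomials vanishing on the
line through the origin corresponding to `P`. -/
noncomputable def pointIdeal (k : Type*) [Field k] (P : ℙ k (Fin 3 → k)) :
    Ideal (MvPolynomial (Fin 3) k) where
  carrier := {f | ∀ c : k, MvPolynomial.eval (c • P.rep) f = 0}
  zero_mem' := by intro c; simp
  add_mem' := by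
    intro a b ha hb c
    simp [ha c, hb c]
  smul_mem' := by
    intro r f hf c
    simp [smul_eq_mul, hf c]

/-- The defining ideal `I_{mW} = ⋂_{P ∈ W} I_P^m` of the fat point scheme `mW`. -/
noncomputable def fatIdeal (k : Type*) [Field k] (W : Finset (ℙ k (Fin 3 → k))) (m : ℕ) :
    Ideal (MvPolynomial (Fin 3) k) :=
  ⨅ P ∈ W, (pointIdeal k P) ^ m

/-- `α(I)`: the least degree `d` such that `I` contains a nonzero homogeneous
polynomial of degree `d`. -/
noncomputable def alphaDeg (k : Type*) [Field k] (I : Ideal (MvPolynomial (Fin 3) k)) : ℕ :=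
  sInf {d : ℕ | ∃ f ∈ I, f ≠ 0 ∧ MvPolynomial.IsHomogeneous f d}

/-!
For `F ∈ I_P^m` let `ord_P F` be the order of vanishing, which is additive on products. By Bézout's
theorem a line whose points carry total order larger than `deg F` divides `F`, and dividing
it out lowers the degree and the orders at these points by one and changes no order off the line.
If `F` vanishes to order `2r` on `W` and `deg F < r(t + 1)`, this applies `r` times in a row to the
line with `t` points; the quotient vanishes to order `2r` on the remaining configuration and has
degree less than `rt`, so induction on `t` gives `deg F ≥ r(t + 1)`; for `t = 1` the only line can
even be divided out `2r` times. On the other hand the product of the `t` lines shows `α(W) ≤ t`.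
-/

open MvPolynomial

section HomogeneousEvaluation

variable {σ R A : Type*} [CommSemiring R] [CommSemiring A] [Algebra R A]

lemma aeval_smul_of_isHomogeneous {n : ℕ} {φ : MvPolynomial σ R} (hφ : φ.IsHomogeneous n)
    (a : A) (f : σ → A) : aeval (a • f) φ = a ^ n * aeval f φ := by
  simp only [aeval_def, eval₂_eq, Finset.mul_sum]
  refine Finset.sum_congr rfl fun d hd => ?_
  have hdeg : ∑ i ∈ d.support, d i = n := hφ.degree_eq_sum_deg_support hd ▸ rfl
  simp only [Pi.smul_apply, smul_eq_mul, mul_pow, Finset.prod_mul_distrib,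
    Finset.prod_pow_eq_pow_sum, hdeg]
  ring

lemma aeval_add_of_isHomogeneous_one {φ : MvPolynomial σ R} (hφ : φ.IsHomogeneous 1)
    (f g : σ → A) : aeval (f + g) φ = aeval f φ + aeval g φ := by
  rw [← mem_homogeneousSubmodule, homogeneousSubmodule_one_eq_span_X] at hφ
  induction hφ using Submodule.span_induction with
  | mem _ h => obtain ⟨i, rfl⟩ := h; simp
  | zero => simp
  | add p q _ _ hp hq => simp only [map_add, hp, hq]; ring
  | smul c p _ hp => simp only [map_smul, hp, smul_add]

lemma eval_smul_of_isHomogeneous {n : ℕ} {φ : MvPolynomial σ R} (hφ : φ.IsHomogeneous n)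
    (c : R) (v : σ → R) : eval (c • v) φ = c ^ n * eval v φ :=
  aeval_smul_of_isHomogeneous hφ c v

lemma eval_add_of_isHomogeneous_one {φ : MvPolynomial σ R} (hφ : φ.IsHomogeneous 1)
    (v w : σ → R) : eval (v + w) φ = eval v φ + eval w φ :=
  aeval_add_of_isHomogeneous_one hφ v w

/-- A linear form, viewed as a linear functional on the space of its arguments. -/
noncomputable def evalLinearMap {φ : MvPolynomial σ R} (hφ : φ.IsHomogeneous 1) :
    (σ → R) →ₗ[R] R where
  toFun v := eval v φ
  map_add' := eval_add_of_isHomogeneous_one hφ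
  map_smul' c v := by simpa using eval_smul_of_isHomogeneous hφ c v

end HomogeneousEvaluation

section Restriction

variable {σ R : Type*} [CommRing R]

/-- The Taylor expansion `F(v + X·T)` of `F` at `v`, as a polynomial in the parameter `T` whose
coefficients are polynomials in the generic direction `X`. -/
noncomputable def taylorAt (v : σ → R) : MvPolynomial σ R →ₐ[R] Polynomial (MvPolynomial σ R) :=
  aeval fun i => Polynomial.C (C (v i)) + Polynomial.C (X i) * Polynomial.X

/-- The restriction `F(w + s·q)` of `F` to the line through `w` with direction `q`, as a polynomial
in the parameter `s`. -/
noncomputable def restrictLine (w q : σ → R) : MvPolynomial σ R →ₐ[R] Polynomial R :=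
  aeval fun i => Polynomial.C (w i) + Polynomial.C (q i) * Polynomial.X

lemma map_eval_taylorAt (v q : σ → R) (F : MvPolynomial σ R) :
    (taylorAt v F).map (eval q) = restrictLine v q F := by
  have h : (Polynomial.mapAlgHom (aeval q)).comp (taylorAt v) = restrictLine v q := by
    ext i : 1
    simp [taylorAt, restrictLine]
  exact DFunLike.congr_fun h F

lemma eval_restrictLine (w q : σ → R) (s : R) (F : MvPolynomial σ R) :
    (restrictLine w q F).eval s = eval (w + s • q) F := by
  have h : (Polynomial.aeval s).comp (restrictLine w q) = aeval (w + s • q) := by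
    ext i
    simp [restrictLine, mul_comm s]
  exact DFunLike.congr_fun h F

lemma restrictLine_comp_X_add_C (w q : σ → R) (s : R) (F : MvPolynomial σ R) :
    (restrictLine w q F).comp (Polynomial.X + Polynomial.C s) = restrictLine (w + s • q) q F := by
  have h : (Polynomial.taylorAlgHom s).comp (restrictLine w q) = restrictLine (w + s • q) q := by
    ext i : 1
    simp only [restrictLine, AlgHom.comp_apply, aeval_X, Polynomial.taylorAlgHom_apply, map_add,
      map_mul, Polynomial.taylor_C, Polynomial.taylor_X, Pi.add_apply, Pi.smul_apply, smul_eq_mul]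
    ring
  exact DFunLike.congr_fun h F

lemma natDegree_restrictLine_le (w q : σ → R) (F : MvPolynomial σ R) :
    (restrictLine w q F).natDegree ≤ F.totalDegree := by
  have h := aeval_natDegree_le F le_rfl
    (fun i => Polynomial.C (w i) + Polynomial.C (q i) * Polynomial.X) (n := 1) fun i => by
      compute_degree
  rwa [mul_one] at h

lemma coeff_zero_taylorAt (v : σ → R) (F : MvPolynomial σ R) :
    (taylorAt v F).coeff 0 = C (eval v F) := by
  have h : (Polynomial.constantCoeff.comp (taylorAt v).toRingHom) = C.comp (eval v) := by
    ext <;> simp [taylorAt]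
  exact RingHom.congr_fun h F

lemma X_dvd_taylorAt_iff {v : σ → R} {F : MvPolynomial σ R} :
    Polynomial.X ∣ taylorAt v F ↔ eval v F = 0 := by
  rw [Polynomial.X_dvd_iff, coeff_zero_taylorAt, C_eq_zero]

lemma taylorAt_of_isHomogeneous_one {φ : MvPolynomial σ R} (hφ : φ.IsHomogeneous 1) (v : σ → R) :
    taylorAt v φ = Polynomial.C (C (eval v φ)) + Polynomial.X * Polynomial.C φ := by
  have hC : aeval (algebraMap R (Polynomial (MvPolynomial σ R)) ∘ v) φ =
      Polynomial.C (C (eval v φ)) := aeval_algebraMap_apply _ v φ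
  have hX : aeval (algebraMap (MvPolynomial σ R) (Polynomial (MvPolynomial σ R)) ∘ X) φ =
      Polynomial.C φ := by
    rw [aeval_algebraMap_apply, aeval_X_left_apply, Polynomial.algebraMap_eq]
  have hsum : (fun i => Polynomial.C (C (v i)) + Polynomial.C (X i) * Polynomial.X) =
      algebraMap R (Polynomial (MvPolynomial σ R)) ∘ v +
        (Polynomial.X : Polynomial (MvPolynomial σ R)) •
          (algebraMap (MvPolynomial σ R) (Polynomial (MvPolynomial σ R)) ∘ X) := by
    ext1 i
    simp only [Pi.add_apply, Pi.smul_apply, Function.comp_apply, smul_eq_mul,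
      Polynomial.algebraMap_apply, algebraMap_eq, Polynomial.algebraMap_eq, Polynomial.X_mul_C]
  rw [taylorAt, hsum, aeval_add_of_isHomogeneous_one hφ, aeval_smul_of_isHomogeneous hφ, hC, hX,
    pow_one]

end Restriction

section VanishingOrder

variable {σ R : Type*} [CommRing R]

/-- The order of vanishing of `F` at the affine point `v`; it is `⊤` for `F = 0`. -/
noncomputable def vanishingOrder (v : σ → R) (F : MvPolynomial σ R) : ℕ∞ :=
  emultiplicity Polynomial.X (taylorAt v F)

lemma vanishingOrder_eq_zero_iff {v : σ → R} {F : MvPolynomial σ R} :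
    vanishingOrder v F = 0 ↔ eval v F ≠ 0 := by
  rw [vanishingOrder, emultiplicity_eq_zero, X_dvd_taylorAt_iff]

lemma le_vanishingOrder_of_mem_pow {v : σ → R} {I : Ideal (MvPolynomial σ R)}
    (hI : ∀ f ∈ I, eval v f = 0) {m : ℕ} {F : MvPolynomial σ R} (hF : F ∈ I ^ m) :
    m ≤ vanishingOrder v F := by
  have hle : I ≤ (Ideal.span {Polynomial.X}).comap (taylorAt v) := fun f hf => by
    rw [Ideal.mem_comap, Ideal.mem_span_singleton, X_dvd_taylorAt_iff]
    exact hI f hf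
  have hmem := (Ideal.pow_right_mono hle m).trans (Ideal.le_comap_pow _ m) hF
  rwa [Ideal.mem_comap, Ideal.span_singleton_pow, Ideal.mem_span_singleton,
    pow_dvd_iff_le_emultiplicity] at hmem

lemma X_sub_C_pow_dvd_restrictLine {w q : σ → R} {s : R} {m : ℕ} {F : MvPolynomial σ R}
    (h : m ≤ vanishingOrder (w + s • q) F) :
    (Polynomial.X - Polynomial.C s) ^ m ∣ restrictLine w q F := by
  rw [Polynomial.X_sub_C_pow_dvd_iff, restrictLine_comp_X_add_C, ← map_eval_taylorAt]
  simpa using Polynomial.map_dvd (eval q) (pow_dvd_of_le_emultiplicity h)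

variable [IsDomain R]

lemma vanishingOrder_mul (v : σ → R) (F G : MvPolynomial σ R) :
    vanishingOrder v (F * G) = vanishingOrder v F + vanishingOrder v G := by
  rw [vanishingOrder, map_mul, emultiplicity_mul Polynomial.prime_X, vanishingOrder, vanishingOrder]

lemma vanishingOrder_of_isHomogeneous_one {φ : MvPolynomial σ R} (hφ : φ.IsHomogeneous 1)
    (hne : φ ≠ 0) {v : σ → R} (hv : eval v φ = 0) : vanishingOrder v φ = 1 := by
  have hX : ¬ (Polynomial.X : Polynomial (MvPolynomial σ R)) ∣ Polynomial.C φ := by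
    rwa [Polynomial.X_dvd_iff, Polynomial.coeff_C_zero]
  rw [vanishingOrder, taylorAt_of_isHomogeneous_one hφ, hv, C_0, Polynomial.C_0, zero_add,
    emultiplicity_mul Polynomial.prime_X, emultiplicity_eq_zero.2 hX, add_zero]
  simpa using emultiplicity_pow_self_of_prime
    (Polynomial.prime_X (R := MvPolynomial σ R)) 1

end VanishingOrder

section ProjVanishingOrder

variable {σ k : Type*} [Field k]

/-- The order of vanishing of `F` along the punctured line of representatives of the projective
point `P`. As `F` need not be homogeneous, it is the least order at a representative. -/
noncomputable def projVanishingOrder (P : ℙ k (σ → k)) (F : MvPolynomial σ k) : ℕ∞ :=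
  ⨅ c : kˣ, vanishingOrder (c • P.rep) F

lemma projVanishingOrder_mul_of_eval_ne_zero {n : ℕ} {φ : MvPolynomial σ k}
    (hφ : φ.IsHomogeneous n) {P : ℙ k (σ → k)} (hP : eval P.rep φ ≠ 0) (G : MvPolynomial σ k) :
    projVanishingOrder P (φ * G) = projVanishingOrder P G := by
  have hφP (c : kˣ) : vanishingOrder (c • P.rep) φ = 0 := by
    rw [vanishingOrder_eq_zero_iff, Units.smul_def, eval_smul_of_isHomogeneous hφ]
    exact mul_ne_zero (pow_ne_zero _ c.ne_zero) hP
  simp only [projVanishingOrder, vanishingOrder_mul, hφP, zero_add]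

lemma projVanishingOrder_mul_of_eval_eq_zero {φ : MvPolynomial σ k} (hφ : φ.IsHomogeneous 1)
    (hne : φ ≠ 0) {P : ℙ k (σ → k)} (hP : eval P.rep φ = 0) (G : MvPolynomial σ k) :
    projVanishingOrder P (φ * G) = 1 + projVanishingOrder P G := by
  have hφP (c : kˣ) : vanishingOrder (c • P.rep) φ = 1 :=
    vanishingOrder_of_isHomogeneous_one hφ hne <| by
      rw [Units.smul_def, eval_smul_of_isHomogeneous hφ, hP, mul_zero]
  simp only [projVanishingOrder, vanishingOrder_mul, hφP, ENat.add_iInf]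

lemma mem_pointIdeal {P : ℙ k (Fin 3 → k)} {F : MvPolynomial (Fin 3) k} :
    F ∈ pointIdeal k P ↔ ∀ c : k, eval (c • P.rep) F = 0 :=
  Iff.rfl

lemma le_projVanishingOrder_of_mem_pow {P : ℙ k (Fin 3 → k)} {m : ℕ} {F : MvPolynomial (Fin 3) k}
    (hF : F ∈ pointIdeal k P ^ m) : m ≤ projVanishingOrder P F :=
  le_iInf fun c => le_vanishingOrder_of_mem_pow (I := pointIdeal k P)
    (fun f hf => by rw [Units.smul_def]; exact mem_pointIdeal.1 hf c) hF

end ProjVanishingOrder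

section TransverseLine

variable {k V ι : Type*} [Field k] [AddCommGroup V] [Module k V]

lemma exists_forall_linearIndependent_pair [Infinite k] [Finite ι]
    (hV : 1 < Module.finrank k V) {p : ι → V} (hp : ∀ i, p i ≠ 0) :
    ∃ q, ∀ i, LinearIndependent k ![p i, q] := by
  have hproper (i : ι) : Submodule.span k {p i} ≠ ⊤ := fun h => by
    have hle := finrank_span_singleton (K := k) (hp i)
    rw [h, finrank_top] at hle
    omega
  have hcover : ⋃ i, (Submodule.span k {p i} : Set V) ≠ Set.univ := fun h =>
    let ⟨i, hi⟩ := Subspace.exists_eq_top_of_iUnion_eq_univ h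
    hproper i hi
  obtain ⟨q, hq⟩ := (Set.ne_univ_iff_exists_notMem _).1 hcover
  simp only [Set.mem_iUnion, SetLike.mem_coe, Submodule.mem_span_singleton, not_exists] at hq
  exact ⟨q, fun i => (LinearIndependent.pair_iff' (hp i)).2 (hq i)⟩

lemma exists_add_smul_eq_units_smul (hV : Module.finrank k V = 2) {w p q : V}
    (hw : LinearIndependent k ![w, q]) (hp : LinearIndependent k ![p, q]) :
    ∃ (s : k) (c : kˣ), w + s • q = c • p := by
  have hmem : w ∈ Submodule.span k (Set.range ![p, q]) :=
    hp.span_eq_top_of_card_eq_finrank (by simp [hV]) ▸ Submodule.mem_top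
  rw [Matrix.range_cons_cons_empty, Submodule.mem_span_pair] at hmem
  obtain ⟨a, b, rfl⟩ := hmem
  have ha : a ≠ 0 := by
    rintro rfl
    simpa using LinearIndependent.pair_iff.1 hw 1 (-b) (by simp)
  exact ⟨-b, Units.mk0 a ha, by simp [Units.smul_def]⟩

lemma exists_line_through_meeting_lines [Infinite k] [Finite ι] (hV : Module.finrank k V = 2)
    {w : V} (hw : w ≠ 0) {p : ι → V} (hp : ∀ i, p i ≠ 0) :
    ∃ q, ∀ i, ∃ (s : k) (c : kˣ), w + s • q = c • p i := by
  obtain ⟨q, hq⟩ := exists_forall_linearIndependent_pair (k := k) (hV ▸ one_lt_two)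
    (p := fun i : Option ι => i.elim w p) (by rintro (_ | i); exacts [hw, hp i])
  exact ⟨q, fun i => exists_add_smul_eq_units_smul hV (hq none) (hq (some i))⟩

end TransverseLine

section Bezout

variable {σ k : Type*} [Field k]

lemma restrictLine_eq_zero_of_totalDegree_lt {ι : Type*} [Fintype ι] {s : ι → k}
    (hs : Function.Injective s) {m : ι → ℕ} {w q : σ → k} {F : MvPolynomial σ k}
    (hF : ∀ i, m i ≤ vanishingOrder (w + s i • q) F) (hdeg : F.totalDegree < ∑ i, m i) :
    restrictLine w q F = 0 := by
  have hdvd : ∏ i, (Polynomial.X - Polynomial.C (s i)) ^ m i ∣ restrictLine w q F :=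
    Finset.prod_dvd_of_coprime
      (fun i _ j _ hij => (Polynomial.pairwise_coprime_X_sub_C hs hij).pow)
      fun i _ => X_sub_C_pow_dvd_restrictLine (hF i)
  have hprod : (∏ i, (Polynomial.X - Polynomial.C (s i)) ^ m i).natDegree = ∑ i, m i := by
    rw [Polynomial.natDegree_prod_of_monic _ _ fun i _ => (Polynomial.monic_X_sub_C _).pow _]
    simp
  by_contra hne
  have hle := Polynomial.natDegree_le_of_dvd hdvd hne
  have := natDegree_restrictLine_le w q F
  omega

lemma eval_zero_eq_zero_of_forall_smul [Infinite k] {v : σ → k} {F : MvPolynomial σ k}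
    (h : ∀ c : k, c ≠ 0 → eval (c • v) F = 0) : eval 0 F = 0 := by
  have hzero : restrictLine 0 v F = 0 :=
    Polynomial.eq_zero_of_infinite_isRoot _ <| (Set.finite_singleton 0).infinite_compl.mono
      fun c hc => by simpa [Polynomial.IsRoot, eval_restrictLine] using h c hc
  simpa [hzero] using (eval_restrictLine 0 v 0 F).symm

variable [Infinite k] {K : Submodule k (σ → k)}

lemma eval_eq_zero_of_totalDegree_lt_sum_of_ne_zero (hK : Module.finrank k K = 2)
    {S : Finset (ℙ k (σ → k))} (hS : ∀ P ∈ S, P.rep ∈ K) {m : ℙ k (σ → k) → ℕ}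
    {F : MvPolynomial σ k} (hF : ∀ P ∈ S, m P ≤ projVanishingOrder P F)
    (hdeg : F.totalDegree < ∑ P ∈ S, m P) {w : σ → k} (hwK : w ∈ K) (hw : w ≠ 0) :
    eval w F = 0 := by
  obtain ⟨q, hq⟩ := exists_line_through_meeting_lines hK (w := ⟨w, hwK⟩) (by simpa using hw)
    (p := fun P : S => ⟨P.1.rep, hS P.1 P.2⟩) fun P => by simpa using P.1.rep_nonzero
  choose s c hsc using hq
  replace hsc (P : S) : w + s P • (q : σ → k) = c P • P.1.rep := congrArg Subtype.val (hsc P)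
  have hinj : Function.Injective s := fun P Q hPQ => by
    have hrep : c P • P.1.rep = c Q • Q.1.rep := by rw [← hsc, ← hsc, hPQ]
    rw [Subtype.ext_iff, ← P.1.mk_rep, ← Q.1.mk_rep, Projectivization.mk_eq_mk_iff]
    exact ⟨(c P)⁻¹ * c Q, by rw [mul_smul, ← hrep, inv_smul_smul]⟩
  have hzero : restrictLine w q F = 0 :=
    restrictLine_eq_zero_of_totalDegree_lt hinj (m := fun P => m P.1)
      (fun P => hsc P ▸ (hF P.1 P.2).trans (iInf_le _ _)) (by rwa [Finset.sum_coe_sort S m])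
  simpa [hzero] using (eval_restrictLine w q 0 F).symm

lemma eval_eq_zero_of_totalDegree_lt_sum (hK : Module.finrank k K = 2)
    {S : Finset (ℙ k (σ → k))} (hS : ∀ P ∈ S, P.rep ∈ K) {m : ℙ k (σ → k) → ℕ}
    {F : MvPolynomial σ k} (hF : ∀ P ∈ S, m P ≤ projVanishingOrder P F)
    (hdeg : F.totalDegree < ∑ P ∈ S, m P) {w : σ → k} (hwK : w ∈ K) : eval w F = 0 := by
  rcases eq_or_ne w 0 with rfl | hw
  · obtain ⟨P, hP, -⟩ := Finset.exists_ne_zero_of_sum_ne_zero (Nat.ne_zero_of_lt hdeg)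
    exact eval_zero_eq_zero_of_forall_smul fun c hc =>
      eval_eq_zero_of_totalDegree_lt_sum_of_ne_zero hK hS hF hdeg (K.smul_mem c (hS P hP))
        (smul_ne_zero hc P.rep_nonzero)
  · exact eval_eq_zero_of_totalDegree_lt_sum_of_ne_zero hK hS hF hdeg hwK hw

end Bezout

section LinearFormDivides

lemma dvd_sub_aeval {σ R : Type*} [CommRing R] {φ : MvPolynomial σ R} {g : σ → MvPolynomial σ R}
    (hg : ∀ i, φ ∣ X i - g i) (F : MvPolynomial σ R) : φ ∣ F - aeval g F := by
  have h : Ideal.Quotient.mkₐ R (Ideal.span {φ}) =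
      (Ideal.Quotient.mkₐ R (Ideal.span {φ})).comp (aeval g) := by
    ext i
    simpa [Ideal.Quotient.eq, Ideal.mem_span_singleton] using hg i
  rw [← Ideal.mem_span_singleton, ← Ideal.Quotient.eq]
  exact DFunLike.congr_fun h F

variable {σ k : Type*} [Field k] [Infinite k]

lemma exists_eval_eq_one {φ : MvPolynomial σ k} (hφ : φ.IsHomogeneous 1) (hne : φ ≠ 0) :
    ∃ u, eval u φ = 1 := by
  obtain ⟨v, hv⟩ : ∃ v, eval v φ ≠ 0 := by
    contrapose! hne
    exact MvPolynomial.funext fun v => by simpa using hne v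
  exact ⟨(eval v φ)⁻¹ • v, by rw [eval_smul_of_isHomogeneous hφ, pow_one, inv_mul_cancel₀ hv]⟩

lemma dvd_of_forall_eval_eq_zero {φ : MvPolynomial σ k} (hφ : φ.IsHomogeneous 1) (hne : φ ≠ 0)
    {F : MvPolynomial σ k} (h : ∀ w, eval w φ = 0 → eval w F = 0) : φ ∣ F := by
  obtain ⟨u, hu⟩ := exists_eval_eq_one hφ hne
  -- `g` is the projection `v ↦ v - φ(v) u` onto the hyperplane `φ = 0`.
  let g : σ → MvPolynomial σ k := fun i => X i - φ * C (u i)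
  have hdvd : φ ∣ F - aeval g F := dvd_sub_aeval (fun i => by simp [g]) F
  have hzero : aeval g F = 0 := MvPolynomial.funext fun v => by
    have hproj : eval (v + (-eval v φ) • u) φ = 0 := by
      rw [eval_add_of_isHomogeneous_one hφ, eval_smul_of_isHomogeneous hφ, hu]
      ring
    have hg : (fun i => aeval v (g i)) = v + (-eval v φ) • u := by
      ext i
      simp [g, sub_eq_add_neg]
    calc eval v (aeval g F) = aeval (fun i => aeval v (g i)) F := comp_aeval_apply g (aeval v) F
      _ = eval (v + (-eval v φ) • u) F := by rw [hg, aeval_eq_eval]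
      _ = eval v 0 := by rw [h _ hproj, map_zero]
  rwa [hzero, sub_zero] at hdvd

end LinearFormDivides

section PlaneCurves

variable {k : Type*} [Field k] [Infinite k] {φ : MvPolynomial (Fin 3) k}
  {S : Finset (ℙ k (Fin 3 → k))} {F : MvPolynomial (Fin 3) k}

lemma finrank_ker_evalLinearMap (hφ : φ.IsHomogeneous 1) (hne : φ ≠ 0) :
    Module.finrank k (LinearMap.ker (evalLinearMap hφ)) = 2 := by
  obtain ⟨u, hu⟩ := exists_eval_eq_one hφ hne
  have hne : evalLinearMap hφ ≠ 0 := fun h => one_ne_zero (hu.symm.trans (DFunLike.congr_fun h u))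
  have hsum := LinearMap.finrank_range_add_finrank_ker (evalLinearMap hφ)
  rw [LinearMap.range_eq_top.2 (LinearMap.surjective hne), finrank_top, Module.finrank_self,
    Module.finrank_fin_fun] at hsum
  omega

lemma dvd_of_totalDegree_lt_sum (hφ : φ.IsHomogeneous 1) (hne : φ ≠ 0)
    (hS : ∀ P ∈ S, eval P.rep φ = 0) {m : ℙ k (Fin 3 → k) → ℕ}
    (hF : ∀ P ∈ S, m P ≤ projVanishingOrder P F) (hdeg : F.totalDegree < ∑ P ∈ S, m P) : φ ∣ F :=
  dvd_of_forall_eval_eq_zero hφ hne fun _ hw =>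
    eval_eq_zero_of_totalDegree_lt_sum (finrank_ker_evalLinearMap hφ hne) hS hF hdeg hw

lemma pow_dvd_of_totalDegree_lt (hφ : φ.IsHomogeneous 1) (hne : φ ≠ 0) (hSne : S.Nonempty)
    (hS : ∀ P ∈ S, eval P.rep φ = 0) {s e : ℕ}
    (hF : ∀ P ∈ S, (s + e : ℕ) ≤ projVanishingOrder P F)
    (hdeg : F.totalDegree < s + S.card * e) : φ ^ s ∣ F := by
  induction s generalizing F with
  | zero => simp
  | succ s ih =>
    have hcard : s + 1 + S.card * e ≤ S.card * (s + 1 + e) := by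
      rw [mul_add]
      gcongr
      exact Nat.le_mul_of_pos_left _ hSne.card_pos
    obtain ⟨G, rfl⟩ : φ ∣ F :=
      dvd_of_totalDegree_lt_sum hφ hne hS hF (by simpa using hdeg.trans_le hcard)
    rcases eq_or_ne G 0 with rfl | hG
    · simp
    rw [pow_succ']
    refine mul_dvd_mul_left φ (ih (fun P hP => ?_) ?_)
    · have hP' := hF P hP
      rw [projVanishingOrder_mul_of_eval_eq_zero hφ hne (hS P hP), Nat.add_right_comm,
        Nat.cast_succ, add_comm] at hP'
      exact (ENat.add_le_add_iff_left ENat.one_ne_top).1 hP'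
    · rw [totalDegree_mul_of_isDomain hne hG, hφ.totalDegree hne] at hdeg
      omega

lemma exists_eq_pow_mul_of_totalDegree_lt (hφ : φ.IsHomogeneous 1) (hne : φ ≠ 0)
    (hSne : S.Nonempty) (hS : ∀ P ∈ S, eval P.rep φ = 0) {s e : ℕ} (hF0 : F ≠ 0)
    (hF : ∀ P ∈ S, (s + e : ℕ) ≤ projVanishingOrder P F)
    (hdeg : F.totalDegree < s + S.card * e) :
    ∃ G, G ≠ 0 ∧ F = φ ^ s * G ∧ F.totalDegree = s + G.totalDegree := by
  obtain ⟨G, rfl⟩ := pow_dvd_of_totalDegree_lt hφ hne hSne hS hF hdeg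
  have hG : G ≠ 0 := right_ne_zero_of_mul hF0
  refine ⟨G, hG, rfl, ?_⟩
  rw [totalDegree_mul_of_isDomain (pow_ne_zero s hne) hG,
    (hφ.pow s).totalDegree (pow_ne_zero s hne), one_mul]

theorem mul_le_totalDegree_of_le_projVanishingOrder {t : ℕ}
    {T : Fin (t + 1) → Finset (ℙ k (Fin 3 → k))} {φ : Fin (t + 1) → MvPolynomial (Fin 3) k}
    (hhom : ∀ i, (φ i).IsHomogeneous 1) (hne : ∀ i, φ i ≠ 0)
    (hcard : ∀ i : Fin (t + 1), (i : ℕ) + 1 ≤ (T i).card)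
    (honline : ∀ i, ∀ P ∈ T i, eval P.rep (φ i) = 0)
    (hoff : ∀ i j, i < j → ∀ P ∈ T i, eval P.rep (φ j) ≠ 0) {r : ℕ} (hF0 : F ≠ 0)
    (hF : ∀ i, ∀ P ∈ T i, (2 * r : ℕ) ≤ projVanishingOrder P F) :
    r * (t + 2) ≤ F.totalDegree := by
  have hTne (i) : (T i).Nonempty := Finset.card_pos.1 (Nat.succ_pos i |>.trans_le (hcard i))
  by_contra! hlt
  induction t generalizing F with
  | zero =>
    obtain ⟨G, -, -, hdeg⟩ := exists_eq_pow_mul_of_totalDegree_lt (hhom 0) (hne 0) (hTne 0)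
      (honline 0) (s := 2 * r) (e := 0) hF0 (hF 0) (by omega)
    omega
  | succ t ih =>
    let l := Fin.last (t + 1)
    have hroom : r * (t + 1 + 2) ≤ r + (T l).card * r := by
      have := Nat.mul_le_mul_right r (hcard l)
      simp only [l, Fin.val_last] at this
      linarith
    obtain ⟨G, hG0, rfl, hdeg⟩ := exists_eq_pow_mul_of_totalDegree_lt (hhom l) (hne l) (hTne l)
      (honline l) (s := r) (e := r) hF0 (by simpa [two_mul] using hF l) (hlt.trans_le hroom)
    refine ih (fun i => hhom i.castSucc) (fun i => hne _) (fun i => hcard i.castSucc)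
      (fun i => honline _) (fun i j hij => hoff _ _ hij) hG0 (fun i P hP => ?_) (fun i => hTne _)
      (by linarith)
    rw [← projVanishingOrder_mul_of_eval_ne_zero ((hhom l).pow r)]
    · exact hF _ P hP
    · rw [map_pow]
      exact pow_ne_zero r (hoff _ _ (Fin.castSucc_lt_last i) P hP)

end PlaneCurves

section Alpha

variable {k : Type*} [Field k]

lemma prod_pow_mem_fatIdeal {ι : Type*} [Fintype ι] {φ : ι → MvPolynomial (Fin 3) k} {n : ι → ℕ}
    (hhom : ∀ i, (φ i).IsHomogeneous (n i)) {W : Finset (ℙ k (Fin 3 → k))}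
    (hW : ∀ P ∈ W, ∃ i, eval P.rep (φ i) = 0) (m : ℕ) : (∏ i, φ i) ^ m ∈ fatIdeal k W m := by
  simp only [fatIdeal, Submodule.mem_iInf]
  refine fun P hP => Ideal.pow_mem_pow (mem_pointIdeal.2 fun c => ?_) m
  obtain ⟨i, hi⟩ := hW P hP
  rw [map_prod]
  refine Finset.prod_eq_zero (Finset.mem_univ i) ?_
  rw [eval_smul_of_isHomogeneous (hhom i), hi, mul_zero]

variable {I : Ideal (MvPolynomial (Fin 3) k)} {f : MvPolynomial (Fin 3) k} {d n : ℕ}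

lemma alphaDeg_le (hf : f ∈ I) (hne : f ≠ 0) (hd : f.IsHomogeneous d) : alphaDeg k I ≤ d :=
  Nat.sInf_le ⟨f, hf, hne, hd⟩

lemma le_alphaDeg (hf : f ∈ I) (hne : f ≠ 0) (hd : f.IsHomogeneous d)
    (h : ∀ g ∈ I, g ≠ 0 → n ≤ g.totalDegree) : n ≤ alphaDeg k I := by
  refine le_csInf ⟨d, f, hf, hne, hd⟩ ?_
  rintro e ⟨g, hg, hg0, he⟩
  exact he.totalDegree hg0 ▸ h g hg hg0

end Alpha

theorem stmt17_general {k : Type*} [Field k] [Infinite k] {t : ℕ} (ht : 0 < t)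
    {W : Finset (ℙ k (Fin 3 → k))} {T : Fin t → Finset (ℙ k (Fin 3 → k))}
    {φ : Fin t → MvPolynomial (Fin 3) k} (hhom : ∀ i, (φ i).IsHomogeneous 1) (hne : ∀ i, φ i ≠ 0)
    (hW : ∀ P, P ∈ W ↔ ∃ i, P ∈ T i) (hcard : ∀ i : Fin t, (i : ℕ) + 1 ≤ (T i).card)
    (honline : ∀ i, ∀ P ∈ T i, eval P.rep (φ i) = 0)
    (hoff : ∀ i j, i < j → ∀ P ∈ T i, eval P.rep (φ j) ≠ 0) (r : ℕ) :
    r * alphaDeg k (fatIdeal k W 1) + r ≤ alphaDeg k (fatIdeal k W (2 * r)) := by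
  obtain ⟨t, rfl⟩ := Nat.exists_eq_succ_of_ne_zero ht.ne'
  have hprod0 : ∏ i, φ i ≠ 0 := Finset.prod_ne_zero_iff.2 fun i _ => hne i
  have hprod : (∏ i, φ i).IsHomogeneous (t + 1) := by
    simpa using IsHomogeneous.prod Finset.univ φ (fun _ => 1) fun i _ => hhom i
  have hmem := prod_pow_mem_fatIdeal hhom (W := W) fun P hP =>
    let ⟨i, hi⟩ := (hW P).1 hP
    ⟨i, honline i P hi⟩
  have hupper : alphaDeg k (fatIdeal k W 1) ≤ t + 1 :=
    alphaDeg_le (hmem 1) (pow_ne_zero 1 hprod0) (by simpa using hprod)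
  have hlower : r * (t + 2) ≤ alphaDeg k (fatIdeal k W (2 * r)) := by
    refine le_alphaDeg (hmem _) (pow_ne_zero _ hprod0) (hprod.pow _) fun F hF hF0 => ?_
    simp only [fatIdeal, Submodule.mem_iInf] at hF
    exact mul_le_totalDegree_of_le_projVanishingOrder hhom hne hcard honline hoff hF0
      fun i P hP => le_projVanishingOrder_of_mem_pow (hF P ((hW P).2 ⟨i, hP⟩))
  calc r * alphaDeg k (fatIdeal k W 1) + r ≤ r * (t + 1) + r := by gcongr
    _ = r * (t + 2) := by ring
    _ ≤ alphaDeg k (fatIdeal k W (2 * r)) := hlower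

theorem stmt17 (k : Type*) [Field k] [IsAlgClosed k] [CharZero k]
    (t : ℕ) (ht : 0 < t)
    (W : Finset (ℙ k (Fin 3 → k)))
    (T : Fin t → Finset (ℙ k (Fin 3 → k)))
    (φ : Fin t → MvPolynomial (Fin 3) k)
    (hhom : ∀ i, (φ i).IsHomogeneous 1)
    (hne : ∀ i, φ i ≠ 0)
    (hprop : ∀ i j, i ≠ j → ∀ a : k, φ i ≠ a • φ j)
    (hW : ∀ P, P ∈ W ↔ ∃ i, P ∈ T i)
    (hcard : ∀ i : Fin t, (T i).card = (i : ℕ) + 1)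
    (honline : ∀ i, ∀ P ∈ T i, MvPolynomial.eval (Projectivization.rep P) (φ i) = 0)
    (hone : ∀ P ∈ W, ∀ i j : Fin t, i ≠ j →
      ¬(MvPolynomial.eval (Projectivization.rep P) (φ i) = 0 ∧
        MvPolynomial.eval (Projectivization.rep P) (φ j) = 0))
    (r : ℕ) (hr : 1 ≤ r) :
    r * alphaDeg k (fatIdeal k W 1) + r ≤ alphaDeg k (fatIdeal k W (2 * r)) := by
  exact stmt17_general ht hhom hne hW (fun i => (hcard i).ge) honline
    (fun i j hij P hP h => hone P ((hW P).2 ⟨i, hP⟩) i j hij.ne ⟨honline i P hP, h⟩) r
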